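/- Let a, b be real d×d matrices, t > 0, and q_s := ∫₀ˢ exp(ub) aᵀa exp(ubᵀ) du for s ∈ [0, t]. Let v be an invertible real symmetric d×d matrix. Then the following are equivalent: (i) det(I_d − 2·(s/t)·q_t·v) ≠ 0 for all s ∈ [0, t]; (ii) det(I_d − 2 q_s v) ≠ 0 for all s ∈ [0, t]. -/

import Mathlib

open Matrix MeasureTheory

/-- The matrix `q_s := ∫₀ˢ exp(ub) aᵀa exp(ubᵀ) du` (Bochner integral, computed entrywise). -/
noncomputable def qMat {d : ℕ} (a b : Matrix (Fin d) (Fin d) ℝ) (s : ℝ) :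
    Matrix (Fin d) (Fin d) ℝ :=
  Matrix.of fun i j =>
    ∫ u in (0:ℝ)..s,
      (NormedSpace.exp (u • b) * (aᵀ * a) * NormedSpace.exp (u • bᵀ)) i j

open scoped MatrixOrder Matrix.Norms.L2Operator in
theorem aux_sqrt_path {d : ℕ} (P : ℝ → Matrix (Fin d) (Fin d) ℝ) (hP : Continuous P)
    (h : ∀ x, (P x).PosSemidef) : ∃ S : ℝ → Matrix (Fin d) (Fin d) ℝ, Continuous S ∧
    ∀ x, (S x)ᵀ = S x ∧ S x * S x = P x := by
  refine ⟨fun x => CFC.sqrt (P x), ?_, ?_⟩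
  · exact CFC.continuousOn_sqrt.comp_continuous hP fun x => (h x).nonneg
  · intro x
    refine ⟨?_, CFC.sqrt_mul_sqrt_self _ (h x).nonneg⟩
    have := (CFC.sqrt_nonneg (P x)).posSemidef.isHermitian
    simpa [IsHermitian, conjTranspose_eq_transpose_of_trivial] using this

open scoped Matrix.Norms.L2Operator in
theorem aux_exp_cont {d : ℕ} (b : Matrix (Fin d) (Fin d) ℝ) :
    Continuous fun u : ℝ => NormedSpace.exp (u • b) := by
  let _ : NormedAlgebra ℚ (Matrix (Fin d) (Fin d) ℝ) := NormedAlgebra.restrictScalars ℚ ℝ _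
  exact (NormedSpace.exp_continuous (𝔸 := Matrix (Fin d) (Fin d) ℝ)).comp (by fun_prop)

theorem aux_posDef_path {d : ℕ} (G : ℝ → Matrix (Fin d) (Fin d) ℝ) (hG : Continuous G)
    (hs : ∀ x, (G x)ᵀ = G x) (hdet : ∀ x, (G x).det ≠ 0) (h0 : G 0 = 1) (x : ℝ) :
    (G x).PosDef := by
  have hH : ∀ x, (G x).IsHermitian := fun x => by
    simpa [IsHermitian, conjTranspose_eq_transpose_of_trivial] using hs x
  have key : {x | (G x).PosDef} = Set.univ := by
    have hne : {x | (G x).PosDef}.Nonempty := ⟨0, by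
      show (G 0).PosDef
      rw [h0]; exact PosDef.one⟩
    refine IsClopen.eq_univ ⟨?_, ?_⟩ hne
    · have : {x | (G x).PosDef} = ⋂ y : Fin d → ℝ, {x | 0 ≤ y ⬝ᵥ (G x *ᵥ y)} := by
        ext x
        simp only [Set.mem_iInter]
        constructor
        · intro (h : (G x).PosDef) y
          simpa using h.posSemidef.dotProduct_mulVec_nonneg y
        · intro h
          have : (G x).PosSemidef :=
            PosSemidef.of_dotProduct_mulVec_nonneg (hH x) (by simpa using h)
          exact this.posDef_iff_det_ne_zero.2 (hdet x)
      rw [this]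
      refine isClosed_iInter fun y => isClosed_le continuous_const ?_
      fun_prop
    · rw [isOpen_iff_mem_nhds]
      intro x (hx : (G x).PosDef)
      have hK : IsCompact (Metric.sphere (0 : Fin d → ℝ) 1) := isCompact_sphere _ _
      have := hK.eventually_forall_of_forall_eventually (x₀ := x)
        (P := fun s y => 0 < y ⬝ᵥ (G s *ᵥ y)) (by
          intro y hy
          have hc : Continuous fun z : ℝ × (Fin d → ℝ) => z.2 ⬝ᵥ (G z.1 *ᵥ z.2) := by
            have := hG.comp (continuous_fst (X := ℝ) (Y := Fin d → ℝ))
            exact continuous_snd.dotProduct (this.matrix_mulVec continuous_snd)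
          refine (hc.tendsto (x, y)).eventually_const_lt ?_
          have hy0 : y ≠ 0 := by
            rintro rfl
            simp at hy
          simpa using hx.dotProduct_mulVec_pos hy0)
      filter_upwards [this] with s h
      refine PosDef.of_dotProduct_mulVec_pos (hH s) fun y hy => ?_
      have hn : 0 < ‖y‖ := norm_pos_iff.2 hy
      have := h (‖y‖⁻¹ • y) (by simp [norm_smul, hn.ne'])
      simp only [mulVec_smul, smul_dotProduct, dotProduct_smul, smul_eq_mul] at this
      rw [star_trivial]
      have hi : 0 < ‖y‖⁻¹ := inv_pos.2 hn
      exact (mul_pos_iff_of_pos_left hi).1 ((mul_pos_iff_of_pos_left hi).1 this)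
  have : x ∈ {x | (G x).PosDef} := by rw [key]; trivial
  exact this

theorem aux_range {d : ℕ} (Q R : Matrix (Fin d) (Fin d) ℝ) (hR : R.PosSemidef)
    (hQR : (Q - R).PosSemidef) (y : Fin d → ℝ) : ∃ w, Q *ᵥ w = R *ᵥ y := by
  by_contra hcon
  have hQ : Q.PosSemidef := by simpa using hQR.add hR
  have hx : R *ᵥ y ∉ LinearMap.range Q.mulVecLin := by
    rintro ⟨w, hw⟩
    exact hcon ⟨w, hw⟩
  obtain ⟨f, hf, hle⟩ := Submodule.exists_le_ker_of_notMem hx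
  obtain ⟨z, rfl⟩ := (dotProductEquiv ℝ (Fin d)).surjective f
  have h1 : z ⬝ᵥ (Q *ᵥ z) = 0 := by
    have : Q *ᵥ z ∈ LinearMap.range Q.mulVecLin := ⟨z, rfl⟩
    simpa using hle this
  have h2 := hR.dotProduct_mulVec_nonneg z
  have h3 := hQR.dotProduct_mulVec_nonneg z
  rw [sub_mulVec, dotProduct_sub] at h3
  simp only [star_trivial] at h2 h3
  have h4 : z ⬝ᵥ (R *ᵥ z) = 0 := by linarith
  have h5 : R *ᵥ z = 0 := (hR.dotProduct_mulVec_zero_iff z).1 (by simpa using h4)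
  have hRt : Rᵀ = R := by
    simpa [IsHermitian, conjTranspose_eq_transpose_of_trivial] using hR.isHermitian
  apply hf
  simp only [dotProductEquiv_apply_apply]
  rw [dotProduct_mulVec, ← mulVec_transpose, hRt, h5, zero_dotProduct]

theorem aux_core {d : ℕ} (v Q R : Matrix (Fin d) (Fin d) ℝ) (hv : vᵀ = v)
    (P : ℝ → Matrix (Fin d) (Fin d) ℝ) (hP : Continuous P) (hpsd : ∀ s, (P s).PosSemidef)
    (h0 : P 0 = 0) (t : ℝ) (ht : P t = Q)
    (hdet : ∀ s, ((1 : Matrix (Fin d) (Fin d) ℝ) - (2:ℝ) • (P s * v)).det ≠ 0)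
    (hR : R.PosSemidef) (hQR : (Q - R).PosSemidef) :
    ((1 : Matrix (Fin d) (Fin d) ℝ) - (2:ℝ) • (R * v)).det ≠ 0 := by
  obtain ⟨S, hSc, hS⟩ := aux_sqrt_path P hP hpsd
  have hpd := aux_posDef_path (fun s => 1 - (2:ℝ) • (S s * v * S s)) (by fun_prop)
    (by
      intro s
      simp [transpose_mul, (hS s).1, hv, Matrix.mul_assoc])
    (by
      intro s
      have := hdet s
      rw [← (hS s).2, Matrix.mul_assoc, ← Matrix.mul_smul, det_one_sub_mul_comm] at this
      simpa [Matrix.mul_assoc] using this)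
    (by
      have h1 := hS 0
      rw [h0] at h1
      have h2 : S 0 = 0 := by
        have : (S 0)ᴴ * S 0 = 0 := by
          rw [conjTranspose_eq_transpose_of_trivial, h1.1, h1.2]
        exact Matrix.conjTranspose_mul_self_eq_zero.1 this
      simp [h2]) t
  have hSt := hS t
  rw [ht] at hSt
  generalize S t = T at hpd hSt
  obtain ⟨hT, hTQ⟩ := hSt
  intro hzero
  obtain ⟨x, hx0, hx⟩ := Matrix.exists_mulVec_eq_zero_iff.2 hzero
  set y := (2:ℝ) • (v *ᵥ x) with hy
  have hxy : x = R *ᵥ y := by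
    rw [sub_mulVec, one_mulVec, sub_eq_zero, smul_mulVec, ← mulVec_mulVec] at hx
    rw [hy, mulVec_smul]
    exact hx
  obtain ⟨w, hw⟩ := aux_range Q R hR hQR y
  rw [← hxy] at hw
  have hxT : T *ᵥ (T *ᵥ w) = x := by rw [mulVec_mulVec, hTQ, hw]
  have hTw : T *ᵥ w ≠ 0 := by
    intro h
    rw [h, mulVec_zero] at hxT
    exact hx0 hxT.symm
  have hRt : Rᵀ = R := by
    simpa [IsHermitian, conjTranspose_eq_transpose_of_trivial] using hR.isHermitian
  have hmove : ∀ p q : Fin d → ℝ, p ⬝ᵥ (T *ᵥ q) = (T *ᵥ p) ⬝ᵥ q := by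
    intro p q
    rw [dotProduct_mulVec, ← mulVec_transpose, hT]
  have hmoveR : ∀ p q : Fin d → ℝ, p ⬝ᵥ (R *ᵥ q) = (R *ᵥ p) ⬝ᵥ q := by
    intro p q
    rw [dotProduct_mulVec, ← mulVec_transpose, hRt]
  have h1 := hpd.dotProduct_mulVec_pos hTw
  rw [star_trivial, sub_mulVec, one_mulVec, dotProduct_sub, smul_mulVec, dotProduct_smul,
    ← mulVec_mulVec, ← mulVec_mulVec, hxT, hmove _ (v *ᵥ x), hxT, ← hmove, hxT] at h1
  have h2 := hR.dotProduct_mulVec_nonneg (w - y)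
  have h3 := hQR.dotProduct_mulVec_nonneg w
  rw [star_trivial] at h2 h3
  rw [sub_mulVec, dotProduct_sub, hw] at h3
  rw [mulVec_sub, dotProduct_sub, sub_dotProduct, sub_dotProduct, hmoveR y w, ← hxy] at h2
  have h4 : y ⬝ᵥ x = 2 * (x ⬝ᵥ (v *ᵥ x)) := by
    rw [hy, smul_dotProduct, dotProduct_comm, smul_eq_mul]
  have h5 : x ⬝ᵥ w = w ⬝ᵥ x := dotProduct_comm _ _
  simp only [smul_eq_mul] at h1
  linarith

theorem aux_integrand_cont {d : ℕ} (a b : Matrix (Fin d) (Fin d) ℝ) :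
    Continuous fun u : ℝ => NormedSpace.exp (u • b) * (aᵀ * a) * NormedSpace.exp (u • bᵀ) :=
  ((aux_exp_cont b).mul continuous_const).mul (aux_exp_cont bᵀ)

theorem aux_q_cont {d : ℕ} (a b : Matrix (Fin d) (Fin d) ℝ) : Continuous (qMat a b) := by
  refine continuous_matrix fun i j => ?_
  simp only [qMat, of_apply]
  refine intervalIntegral.continuous_primitive (fun x y => ?_) 0
  exact ((aux_integrand_cont a b).matrix_elem i j).intervalIntegrable _ _

theorem aux_q_mono {d : ℕ} (a b : Matrix (Fin d) (Fin d) ℝ) {s s' : ℝ} (h : s ≤ s') :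
    (qMat a b s' - qMat a b s).PosSemidef := by
  set M := fun u : ℝ => NormedSpace.exp (u • b) * (aᵀ * a) * NormedSpace.exp (u • bᵀ) with hM
  have hMc : ∀ i j, Continuous fun u => M u i j :=
    fun i j => (aux_integrand_cont a b).matrix_elem i j
  have hMp : ∀ u, (M u).PosSemidef := by
    intro u
    have : M u = (a * NormedSpace.exp (u • bᵀ))ᴴ * (a * NormedSpace.exp (u • bᵀ)) := by
      rw [hM, conjTranspose_eq_transpose_of_trivial, transpose_mul, ← Matrix.exp_transpose,
        transpose_smul, transpose_transpose]
      simp only [Matrix.mul_assoc]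
    rw [this]
    exact posSemidef_conjTranspose_mul_self _
  have hint : ∀ i j, (qMat a b s' - qMat a b s) i j = ∫ u in s..s', M u i j := by
    intro i j
    simp only [qMat, Matrix.sub_apply, of_apply]
    exact intervalIntegral.integral_interval_sub_left ((hMc i j).intervalIntegrable _ _)
      ((hMc i j).intervalIntegrable _ _)
  refine PosSemidef.of_dotProduct_mulVec_nonneg ?_ fun x => ?_
  · ext i j
    rw [conjTranspose_apply, star_trivial, hint, hint]
    congr 1
    ext u
    simpa using (hMp u).isHermitian.apply i j
  · have : star x ⬝ᵥ (qMat a b s' - qMat a b s) *ᵥ x = ∫ u in s..s', x ⬝ᵥ (M u *ᵥ x) := by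
      simp only [dotProduct, mulVec, star_trivial, hint]
      rw [intervalIntegral.integral_finsetSum]
      · refine Finset.sum_congr rfl fun i _ => ?_
        rw [intervalIntegral.integral_const_mul, intervalIntegral.integral_finsetSum]
        · simp only [intervalIntegral.integral_mul_const]
        · intro j _
          exact ((hMc i j).mul continuous_const).intervalIntegrable _ _
      · intro i _
        refine Continuous.intervalIntegrable ?_ _ _
        exact continuous_const.mul (continuous_finsetSum _ fun j _ => (hMc i j).mul continuous_const)
    rw [this]
    refine intervalIntegral.integral_nonneg h fun u _ => ?_
    simpa using (hMp u).dotProduct_mulVec_nonneg x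

theorem aux_q_zero {d : ℕ} (a b : Matrix (Fin d) (Fin d) ℝ) : qMat a b 0 = 0 := by
  ext i j
  simp [qMat]

/-- For `v` an invertible symmetric matrix and `t > 0`:
`det(I − 2 (s/t) q_t v) ≠ 0` for all `s ∈ [0,t]` iff `det(I − 2 q_s v) ≠ 0` for all
`s ∈ [0,t]`. -/
theorem stmt_16 (d : ℕ) (a b : Matrix (Fin d) (Fin d) ℝ) (t : ℝ) (ht : 0 < t)
    (v : Matrix (Fin d) (Fin d) ℝ) (hv : v.IsSymm) (hvu : IsUnit v) :
    (∀ s ∈ Set.Icc (0:ℝ) t,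
        ((1 : Matrix (Fin d) (Fin d) ℝ) - ((2:ℝ) * (s / t)) • (qMat a b t * v)).det ≠ 0) ↔
      (∀ s ∈ Set.Icc (0:ℝ) t,
        ((1 : Matrix (Fin d) (Fin d) ℝ) - (2:ℝ) • (qMat a b s * v)).det ≠ 0) := by
  have hqp : ∀ s, 0 ≤ s → (qMat a b s).PosSemidef := fun s hs => by
    simpa [aux_q_zero] using aux_q_mono a b hs
  have hQ := hqp t ht.le
  have hcl : ∀ s : ℝ, max 0 (min t s) ∈ Set.Icc 0 t := fun s =>
    ⟨le_max_left _ _, max_le ht.le (min_le_left _ _)⟩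
  constructor
  · intro h s hs
    refine aux_core v (qMat a b t) (qMat a b s) hv
      (fun r => (max 0 (min t r) / t) • qMat a b t) ?_ ?_ ?_ t ?_ ?_ (hqp s hs.1)
      (aux_q_mono a b hs.2)
    · have hc : Continuous fun r : ℝ => max 0 (min t r) / t := by fun_prop
      exact hc.smul continuous_const
    · exact fun r => hQ.smul (div_nonneg (hcl r).1 ht.le)
    · simp [ht.le]
    · simp [ht.le, ht.ne']
    · intro r
      have := h _ (hcl r)
      rwa [mul_smul, ← Matrix.smul_mul] at this
  · intro h s hs
    have h1 : s / t ≤ 1 := (div_le_one ht).2 hs.2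
    have := aux_core v (qMat a b t) ((s / t) • qMat a b t) hv
      (fun r => qMat a b (max 0 (min t r))) ?_ ?_ ?_ t ?_ ?_
      (hQ.smul (div_nonneg hs.1 ht.le)) ?_
    · rwa [Matrix.smul_mul, ← mul_smul] at this
    · exact (aux_q_cont a b).comp (by fun_prop)
    · exact fun r => hqp _ (hcl r).1
    · simp [ht.le, aux_q_zero]
    · simp [ht.le]
    · exact fun r => h _ (hcl r)
    · have := hQ.smul (sub_nonneg.2 h1)
      rwa [sub_smul, one_smul] at this
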